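/- arXiv:1805.08188 — 2 statements merged into one kernel-verified Lean document; each statement's English description precedes it below -/
import Mathlib

section
/- Let H be a complex separable infinite-dimensional Hilbert space and 𝒯 = (T_1, …, T_n) an n-tuple of bounded operators on H. Let (λ_k)_{k≥1} be a sequence contained in the interior (in ℂ^n) of W_e(𝒯), and suppose ∑_{k=1}^∞ dist(λ_k, ℂ^n ∖ W_e(𝒯)) = ∞. Then there exists an orthonormal basis (u_k)_{k≥1} of H such that ⟨T_j u_k, u_k⟩ = λ_{k,j} for every k ≥ 1 and every j = 1, …, n. -/
open Filter Metric
open scoped ComplexInnerProductSpace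

/-- The joint essential numerical range of a tuple of bounded operators: the set of
`λ ∈ ℂ^n` for which there is an orthonormal sequence `(x_k)` with
`⟨T_j x_k, x_k⟩ → λ_j` for every `j`. -/
def jointEssNumRange {H : Type*} [NormedAddCommGroup H] [InnerProductSpace ℂ H]
    {n : ℕ} (T : Fin n → H →L[ℂ] H) : Set (Fin n → ℂ) :=
  {lam | ∃ x : ℕ → H, Orthonormal ℂ x ∧
    ∀ j, Tendsto (fun k => ⟪(T j) (x k), x k⟫) atTop (nhds (lam j))}

/-!
Convex combinations of finitely many approximately attained points of the joint essential numerical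
range are themselves exactly attained, because the approximating unit vectors can be chosen without
cross terms. Hence every interior point is attained on the orthogonal complement of any
finite-dimensional subspace.

The basis is built greedily. At step `k` let `b` be the normalised residual, modulo the earlier
vectors, of the worst approximated member of a null sequence with dense span. Since `lam k` is at
distance of order `t k` from the complement, it is a convex combination, with weight `t k` on the
value at `b`, of that value and another interior point; so the new vector can have component
`√(t k)` along `b`, and the squared residual drops by the fraction `t k`. As `∑ t k = ∞`, all
residuals tend to zero.
-/

section Convexity

variable {E : Type*} [NormedAddCommGroup E] [NormedSpace ℝ E]

/- Rådström's cancellation: a functional separating `x` from the hull of `S` would have a supremum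
on `closedBall x δ` exceeding its supremum on `thickening δ S`. -/
lemma mem_closure_convexHull_of_closedBall_subset_thickening {S : Set E} {x : E} {δ : ℝ}
    (hδ : 0 < δ) (h : closedBall x δ ⊆ thickening δ S) : x ∈ closure (convexHull ℝ S) := by
  by_contra hx
  obtain ⟨f, c, hfS, hfx⟩ :=
    geometric_hahn_banach_closed_point (convex_convexHull ℝ S).closure isClosed_closure hx
  have hbound : ∀ v : E, ‖v‖ < 1 → δ * f v ≤ c - f x + δ * ‖f‖ := fun v hv => by
    have hmem : x + δ • v ∈ closedBall x δ := by
      rw [mem_closedBall, dist_self_add_left, norm_smul, Real.norm_of_nonneg hδ.le]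
      exact mul_le_of_le_one_right hδ.le hv.le
    obtain ⟨s, hs, hdist⟩ := mem_thickening_iff.1 (h hmem)
    have hfs : f s < c := hfS s (subset_closure (subset_convexHull ℝ S hs))
    have hdiff : f (x + δ • v - s) ≤ ‖f‖ * δ :=
      (le_abs_self _).trans (f.le_opNorm_of_le (by rw [← dist_eq_norm]; exact hdist.le))
    simp only [map_sub, map_add, map_smul, smul_eq_mul] at hdiff
    linarith
  obtain ⟨v, hv, hfv⟩ := f.exists_lt_apply_of_lt_opNorm
    (show ‖f‖ - (f x - c) / δ < ‖f‖ from sub_lt_self _ (div_pos (sub_pos.2 hfx) hδ))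
  have hfv' : δ * ‖f‖ - (f x - c) < δ * |f v| := by
    have := mul_lt_mul_of_pos_left hfv hδ
    rwa [mul_sub, mul_div_cancel₀ _ hδ.ne', Real.norm_eq_abs] at this
  have hpos := hbound v hv
  have hneg := hbound (-v) (by rwa [norm_neg])
  rw [map_neg] at hneg
  rcases abs_cases (f v) with ⟨habs, -⟩ | ⟨habs, -⟩ <;> rw [habs] at hfv' <;> linarith

lemma infDist_compl_le_of_subset_closedBall {s : Set E} {x y : E} {R : ℝ} (hR : 0 ≤ R)
    (hs : s ⊆ closedBall y R) : infDist x sᶜ ≤ R := by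
  rcases subsingleton_or_nontrivial E with _ | _
  · rcases sᶜ.eq_empty_or_nonempty with hempty | ⟨z, hz⟩
    · rwa [hempty, infDist_empty]
    · rwa [infDist_zero_of_mem (Subsingleton.elim z x ▸ hz)]
  · have hdiam : diam (ball x (infDist x sᶜ)) ≤ diam (closedBall y R) :=
      diam_mono (ball_infDist_compl_subset.trans hs) isBounded_closedBall
    rw [diam_ball_eq x infDist_nonneg, diam_closedBall_eq y hR] at hdiam
    linarith

/- The constant `4 * R + 1` forces `t ≤ 1 / 4`, so `μ` lies within `8 / 3 * t * R` of `x`. -/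
lemma exists_mem_interior_convex_combination_eq {s : Set E} {x y : E} {R t : ℝ}
    (hs : s ⊆ closedBall 0 R) (hx : x ∈ interior s) (hy : ‖y‖ ≤ R) (ht₀ : 0 ≤ t)
    (ht : t * (4 * R + 1) ≤ infDist x sᶜ) :
    t < 1 ∧ ∃ μ ∈ interior s, t • y + (1 - t) • μ = x := by
  have hR : 0 ≤ R := (norm_nonneg y).trans hy
  have ht₁ : t ≤ 1 / 4 := by
    have := ht.trans (infDist_compl_le_of_subset_closedBall hR hs)
    nlinarith
  have h1t : 0 < 1 - t := by linarith
  refine ⟨by linarith, x + (t / (1 - t)) • (x - y), ?_, ?_⟩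
  · rcases ht₀.eq_or_lt with rfl | htpos
    · simpa using hx
    · refine interior_maximal (ball_infDist_compl_subset (x := x)) isOpen_ball ?_
      have hxy : ‖x - y‖ ≤ 2 * R := by
        have := mem_closedBall_zero_iff.1 (hs (interior_subset hx))
        linarith [norm_sub_le x y]
      rw [mem_ball, dist_self_add_left, norm_smul, Real.norm_of_nonneg (div_nonneg ht₀ h1t.le),
        div_mul_eq_mul_div, div_lt_iff₀ h1t]
      calc t * ‖x - y‖ ≤ t * (2 * R) := by gcongr
        _ < t * (4 * R + 1) * (3 / 4) := by nlinarith
        _ ≤ infDist x sᶜ * (1 - t) := mul_le_mul ht (by linarith) (by norm_num) infDist_nonneg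
  · rw [smul_add, smul_smul, mul_div_cancel₀ _ h1t.ne']
    module

end Convexity

section GreedyDescent

lemma exists_forall_le_of_tendsto_cofinite_zero {ι : Type*} [Nonempty ι] {f : ι → ℝ}
    (hf₀ : ∀ i, 0 ≤ f i) (hf : Tendsto f cofinite (nhds 0)) : ∃ i, ∀ j, f j ≤ f i := by
  by_cases! hpos : ∃ i, 0 < f i
  · obtain ⟨i, hi⟩ := hpos
    have hfin : {j | f i ≤ f j}.Finite := by
      simpa only [not_lt] using eventually_cofinite.1 (hf.eventually_lt_const hi)
    obtain ⟨m, him, hmax⟩ := Set.exists_max_image _ f hfin ⟨i, le_refl (f i)⟩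
    exact ⟨m, fun j => (le_total (f i) (f j)).elim (hmax j) (·.trans him)⟩
  · exact ⟨Classical.arbitrary ι, fun j => (hpos j).trans (hf₀ _)⟩

/- For fixed `ε > 0` only the finitely many indices with `ε ≤ a 0 i` can be selected while some
value is at least `ε`, and each such selection lowers the sum of `a k` over them by `ε * t k`. -/
lemma tendsto_zero_of_greedy_descent {ι : Type*} {a : ℕ → ι → ℝ} {t : ℕ → ℝ}
    (ht₀ : ∀ k, 0 ≤ t k) (ht : Tendsto (fun N => ∑ k ∈ Finset.range N, t k) atTop atTop)
    (ha₀ : ∀ k i, 0 ≤ a k i) (hanti : Antitone a) (ha : Tendsto (a 0) cofinite (nhds 0))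
    (hgreedy : ∀ k, ∃ m, (∀ i, a k i ≤ a k m) ∧ t k * a k m ≤ a k m - a (k + 1) m) (i : ι) :
    Tendsto (a · i) atTop (nhds 0) := by
  suffices hsmall : ∀ ε > 0, ∃ k, a k i < ε by
    refine tendsto_order.2 ⟨fun b hb => .of_forall fun k => hb.trans_le (ha₀ k i), fun ε hε => ?_⟩
    obtain ⟨K, hK⟩ := hsmall ε hε
    exact eventually_atTop.2 ⟨K, fun k hk => (hanti hk i).trans_lt hK⟩
  intro ε hε
  by_contra! hlarge
  have hfin : {m | ε ≤ a 0 m}.Finite := by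
    simpa only [not_lt] using eventually_cofinite.1 (ha.eventually_lt_const hε)
  set L := hfin.toFinset
  have hdrop : ∀ k, t k * ε ≤ ∑ m ∈ L, a k m - ∑ m ∈ L, a (k + 1) m := fun k => by
    obtain ⟨m, hmax, hdesc⟩ := hgreedy k
    have hεm : ε ≤ a k m := (hlarge k).trans (hmax i)
    have hmL : m ∈ L := hfin.mem_toFinset.2 (hεm.trans (hanti k.zero_le m))
    calc t k * ε ≤ t k * a k m := mul_le_mul_of_nonneg_left hεm (ht₀ k)
      _ ≤ a k m - a (k + 1) m := hdesc
      _ ≤ ∑ m ∈ L, (a k m - a (k + 1) m) := Finset.single_le_sum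
          (f := fun m => a k m - a (k + 1) m)
          (fun m _ => sub_nonneg.2 (hanti k.le_succ m)) hmL
      _ = _ := Finset.sum_sub_distrib ..
  have hbound : ∀ N, (∑ k ∈ Finset.range N, t k) * ε ≤ ∑ m ∈ L, a 0 m := fun N => by
    calc (∑ k ∈ Finset.range N, t k) * ε
        ≤ ∑ k ∈ Finset.range N, (∑ m ∈ L, a k m - ∑ m ∈ L, a (k + 1) m) := by
          rw [Finset.sum_mul]
          exact Finset.sum_le_sum fun k _ => hdrop k
      _ = ∑ m ∈ L, a 0 m - ∑ m ∈ L, a N m := Finset.sum_range_sub' ..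
      _ ≤ ∑ m ∈ L, a 0 m := sub_le_self _ (Finset.sum_nonneg fun m _ => ha₀ N m)
  obtain ⟨N, hN⟩ := (ht.eventually_gt_atTop ((∑ m ∈ L, a 0 m) / ε)).exists
  exact (hbound N).not_gt ((div_lt_iff₀ hε).1 hN)

end GreedyDescent

section InnerProductSpace

variable {𝕜 E : Type*} [RCLike 𝕜] [NormedAddCommGroup E] [InnerProductSpace 𝕜 E]

lemma infDist_eq_norm_sub_starProjection (K : Submodule 𝕜 E) [K.HasOrthogonalProjection] (x : E) :
    infDist x K = ‖x - K.starProjection x‖ := by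
  simp only [infDist_eq_iInf, Submodule.starProjection_minimal, dist_eq_norm]
  rfl

lemma sq_infDist_span_image_of_orthonormal {ι : Type*} {u : ι → E} (hu : Orthonormal 𝕜 u)
    (s : Finset ι) (x : E) :
    infDist x (Submodule.span 𝕜 (u '' s)) ^ 2 = ‖x‖ ^ 2 - ∑ i ∈ s, ‖inner 𝕜 (u i) x‖ ^ 2 := by
  classical
  rw [← Finset.coe_image]
  set K := Submodule.span 𝕜 (s.image u : Set E)
  have hproj : ‖K.starProjection x‖ ^ 2 = ∑ i ∈ s, ‖inner 𝕜 (u i) x‖ ^ 2 := by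
    rw [K.starProjection_apply, ← Submodule.coe_norm,
      ← (OrthonormalBasis.span hu s).sum_sq_norm_inner_right,
      ← Finset.sum_coe_sort s fun i => ‖inner 𝕜 (u i) x‖ ^ 2]
    refine Finset.sum_congr rfl fun i _ => ?_
    rw [K.inner_orthogonalProjectionOnto_eq_of_mem_left, OrthonormalBasis.span_apply]
  rw [infDist_eq_norm_sub_starProjection, ← Submodule.starProjection_orthogonal_val,
    K.norm_sq_eq_add_norm_sq_starProjection x, hproj, add_sub_cancel_left]

lemma tendsto_starProjection_cofinite_zero_of_orthonormal {ι : Type*} {x : ι → E}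
    (hx : Orthonormal 𝕜 x) (F : Submodule 𝕜 E) [FiniteDimensional 𝕜 F] :
    Tendsto (fun i => F.starProjection (x i)) cofinite (nhds 0) := by
  have hcoeff : ∀ v : E, Tendsto (fun i => inner 𝕜 v (x i)) cofinite (nhds 0) := fun v => by
    have hsq := (hx.inner_products_summable v).tendsto_cofinite_zero.sqrt
    simp only [Real.sqrt_sq (norm_nonneg _), Real.sqrt_zero, norm_inner_symm (x _)] at hsq
    exact tendsto_zero_iff_norm_tendsto_zero.2 hsq
  have hsum := tendsto_finsetSum Finset.univ fun j _ =>
    (hcoeff (stdOrthonormalBasis 𝕜 F j)).smul_const (stdOrthonormalBasis 𝕜 F j : E)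
  simpa [(stdOrthonormalBasis 𝕜 F).starProjection_eq_sum_rankOne] using hsum

lemma norm_sqrt_smul_add_sqrt_smul_of_inner_eq_zero {b v : E} (hb : ‖b‖ = 1)
    (hv : ‖v‖ = 1) (hbv : inner 𝕜 b v = 0) {t : ℝ} (ht₀ : 0 ≤ t) (ht₁ : t ≤ 1) :
    ‖(√t : 𝕜) • b + (√(1 - t) : 𝕜) • v‖ = 1 := by
  have hpyth := norm_add_sq_eq_norm_sq_add_norm_sq_of_inner_eq_zero ((√t : 𝕜) • b)
    ((√(1 - t) : 𝕜) • v) (by rw [inner_smul_left, inner_smul_right, hbv]; simp)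
  simp only [norm_smul, hb, hv, mul_one, RCLike.norm_ofReal, abs_of_nonneg (Real.sqrt_nonneg _),
    Real.mul_self_sqrt ht₀, Real.mul_self_sqrt (sub_nonneg.2 ht₁), add_sub_cancel] at hpyth
  nlinarith [norm_nonneg ((√t : 𝕜) • b + (√(1 - t) : 𝕜) • v)]

end InnerProductSpace

section GreedyBasis

lemma exists_tendsto_zero_dense_span (𝕜 E : Type*) [RCLike 𝕜] [NormedAddCommGroup E]
    [NormedSpace 𝕜 E] [TopologicalSpace.SeparableSpace E] :
    ∃ z : ℕ → E, Tendsto z atTop (nhds 0) ∧ Dense (Submodule.span 𝕜 (Set.range z) : Set E) := by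
  let y := TopologicalSpace.denseSeq E
  let c : ℕ → ℝ := fun m => 1 / ((m : ℝ) + 1) * (1 + ‖y m‖)⁻¹
  have hc : ∀ m, 0 < c m := fun m => by positivity
  refine ⟨fun m => (c m : 𝕜) • y m, squeeze_zero_norm (fun m => ?_)
    tendsto_one_div_add_atTop_nhds_zero_nat, ?_⟩
  · rw [norm_smul, RCLike.norm_of_nonneg (hc m).le, mul_assoc]
    refine mul_le_of_le_one_right (by positivity) ?_
    rw [inv_mul_le_iff₀ (by positivity)]
    linarith
  · refine (TopologicalSpace.denseRange_denseSeq E).mono ?_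
    rintro _ ⟨m, rfl⟩
    have hcm : (c m : 𝕜) ≠ 0 := RCLike.ofReal_ne_zero.2 (hc m).ne'
    rw [← inv_smul_smul₀ hcm (TopologicalSpace.denseSeq E m)]
    exact Submodule.smul_mem _ _ (Submodule.subset_span ⟨m, rfl⟩)

variable {𝕜 E : Type*} [RCLike 𝕜] [NormedAddCommGroup E] [InnerProductSpace 𝕜 E]

/- The sequence is built from the sets of earlier vectors alone: as it is injective, the cardinality
of such a set is the index of the next vector. -/
lemma exists_orthonormal_of_forall_exists_mem_orthogonal {P : ℕ → Submodule 𝕜 E → E → Prop}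
    (h : ∀ k (M : Submodule 𝕜 E) [FiniteDimensional 𝕜 M], ∃ u ∈ Mᗮ, ‖u‖ = 1 ∧ P k M u) :
    ∃ u : ℕ → E, Orthonormal 𝕜 u ∧ ∀ k, P k (Submodule.span 𝕜 (u '' Set.Iio k)) (u k) := by
  obtain ⟨u, hu⟩ := Set.seq_of_forall_finite_exists
    (P := fun x s => x ∈ (Submodule.span 𝕜 s)ᗮ ∧ ‖x‖ = 1 ∧ P s.ncard (Submodule.span 𝕜 s) x)
    fun s hs => by
      have := FiniteDimensional.span_of_finite 𝕜 hs
      exact h s.ncard (Submodule.span 𝕜 s)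
  choose hperp hnorm hP using hu
  have hinner : ∀ i j, i < j → inner 𝕜 (u i) (u j) = 0 := fun i j hij =>
    (hperp j) _ (Submodule.subset_span (Set.mem_image_of_mem u hij))
  have hon : Orthonormal 𝕜 u := ⟨hnorm, fun i j hij => hij.lt_or_gt.elim (hinner i j)
    fun hji => inner_eq_zero_symm.1 (hinner j i hji)⟩
  refine ⟨u, hon, fun k => ?_⟩
  have hcard : (u '' Set.Iio k).ncard = k := by
    rw [Set.ncard_image_of_injective _ hon.linearIndependent.injective, Set.ncard_Iio_nat]
  simpa only [hcard] using hP k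

lemma dense_span_range_of_greedy {u : ℕ → E} (hu : Orthonormal 𝕜 u) {z : ℕ → E}
    (hz₀ : Tendsto z atTop (nhds 0)) (hz : Dense (Submodule.span 𝕜 (Set.range z) : Set E))
    {t : ℕ → ℝ} (ht₀ : ∀ k, 0 ≤ t k)
    (ht : Tendsto (fun N => ∑ k ∈ Finset.range N, t k) atTop atTop)
    (hgreedy : ∀ k, ∃ m,
      (∀ p, infDist (z p) (Submodule.span 𝕜 (u '' Set.Iio k)) ≤
        infDist (z m) (Submodule.span 𝕜 (u '' Set.Iio k))) ∧
      t k * infDist (z m) (Submodule.span 𝕜 (u '' Set.Iio k)) ^ 2 ≤ ‖inner 𝕜 (u k) (z m)‖ ^ 2) :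
    Dense (Submodule.span 𝕜 (Set.range u) : Set E) := by
  set a : ℕ → ℕ → ℝ := fun k p => infDist (z p) (Submodule.span 𝕜 (u '' Set.Iio k)) ^ 2
  have ha : ∀ k p, a k p = ‖z p‖ ^ 2 - ∑ i ∈ Finset.range k, ‖inner 𝕜 (u i) (z p)‖ ^ 2 :=
    fun k p => by simp only [a, ← Finset.coe_range, sq_infDist_span_image_of_orthonormal hu]
  have hdecr : ∀ k p, a k p - a (k + 1) p = ‖inner 𝕜 (u k) (z p)‖ ^ 2 := fun k p => by
    rw [ha, ha, Finset.sum_range_succ]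
    ring
  have hlim : ∀ p, Tendsto (a · p) atTop (nhds 0) := by
    refine tendsto_zero_of_greedy_descent ht₀ ht (fun _ _ => sq_nonneg _)
      (antitone_nat_of_succ_le fun k p => sub_nonneg.1 (hdecr k p ▸ sq_nonneg _)) ?_ fun k => ?_
    · have : a 0 = fun p => ‖z p‖ ^ 2 := funext fun p => by simp [ha]
      simpa [this, Nat.cofinite_eq_atTop] using hz₀.norm.pow 2
    · obtain ⟨m, hmax, hdesc⟩ := hgreedy k
      exact ⟨m, fun p => pow_le_pow_left₀ infDist_nonneg (hmax p) 2, hdecr k m ▸ hdesc⟩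
  have hmem : ∀ p, z p ∈ (Submodule.span 𝕜 (Set.range u)).topologicalClosure := fun p => by
    refine (mem_closure_iff_infDist_zero ⟨0, zero_mem _⟩).2 (pow_eq_zero_iff two_ne_zero |>.1 ?_)
    refine le_antisymm (ge_of_tendsto' (hlim p) fun k => ?_) (sq_nonneg _)
    exact pow_le_pow_left₀ infDist_nonneg (infDist_le_infDist_of_subset
      (Submodule.span_mono (Set.image_subset_range u _)) ⟨0, zero_mem _⟩) 2
  have hspan : Submodule.span 𝕜 (Set.range z) ≤
      (Submodule.span 𝕜 (Set.range u)).topologicalClosure :=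
    Submodule.span_le.2 (Set.range_subset_iff.2 hmem)
  exact dense_closure.1 (hz.mono hspan)

theorem exists_hilbertBasis_of_forall_exists_mem_orthogonal [CompleteSpace E]
    [TopologicalSpace.SeparableSpace E] {Q : ℕ → E → Prop} {t : ℕ → ℝ} (ht₀ : ∀ k, 0 ≤ t k)
    (ht : Tendsto (fun N => ∑ k ∈ Finset.range N, t k) atTop atTop)
    (h : ∀ k (M : Submodule 𝕜 E) [FiniteDimensional 𝕜 M] (z : E),
      ∃ u ∈ Mᗮ, ‖u‖ = 1 ∧ Q k u ∧ t k * infDist z M ^ 2 ≤ ‖inner 𝕜 u z‖ ^ 2) :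
    ∃ b : HilbertBasis ℕ 𝕜 E, ∀ k, Q k (b k) := by
  obtain ⟨z, hz₀, hz⟩ := exists_tendsto_zero_dense_span 𝕜 E
  have hmax : ∀ M : Submodule 𝕜 E, ∃ m, ∀ p, infDist (z p) M ≤ infDist (z m) M := fun M => by
    refine exists_forall_le_of_tendsto_cofinite_zero (fun _ => infDist_nonneg)
      (squeeze_zero (g := fun p => ‖z p‖) (fun _ => infDist_nonneg) (fun p => ?_) ?_)
    · simpa using infDist_le_dist_of_mem (x := z p) M.zero_mem
    · simpa [Nat.cofinite_eq_atTop] using hz₀.norm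
  obtain ⟨u, hu, hP⟩ := exists_orthonormal_of_forall_exists_mem_orthogonal
    (P := fun k M x => Q k x ∧ ∃ m, (∀ p, infDist (z p) M ≤ infDist (z m) M) ∧
      t k * infDist (z m) M ^ 2 ≤ ‖inner 𝕜 x (z m)‖ ^ 2) fun k M _ => by
      obtain ⟨m, hm⟩ := hmax M
      obtain ⟨x, hxM, hx, hQ, hdesc⟩ := h k M (z m)
      exact ⟨x, hxM, hx, hQ, m, hm, hdesc⟩
  have hdense := dense_span_range_of_greedy hu hz₀ hz ht₀ ht fun k => (hP k).2
  refine ⟨HilbertBasis.mk hu (Submodule.dense_iff_topologicalClosure_eq_top.1 hdense).ge,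
    fun k => ?_⟩
  rw [HilbertBasis.coe_mk]
  exact (hP k).1

end GreedyBasis

section JointNumericalRange

variable {H : Type*} [NormedAddCommGroup H] [InnerProductSpace ℂ H] {ι : Type*}

/-- The tuple of values at `x` of the quadratic forms of the operators `T j`. -/
noncomputable def quadTuple (T : ι → H →L[ℂ] H) (x : H) : ι → ℂ := fun j => ⟪T j x, x⟫

/-- The joint numerical range of the compressions of the operators `T j` to the subspace `K`. -/
def jointNumRange (T : ι → H →L[ℂ] H) (K : Submodule ℂ H) : Set (ι → ℂ) :=
  quadTuple T '' {x | x ∈ K ∧ ‖x‖ = 1}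

lemma quadTuple_smul (T : ι → H →L[ℂ] H) (c : ℂ) (x : H) :
    quadTuple T (c • x) = ‖c‖ ^ 2 • quadTuple T x := by
  funext j
  simp only [quadTuple, map_smul, inner_smul_left, inner_smul_right, Pi.smul_apply,
    Complex.real_smul, ← mul_assoc, Complex.ofReal_pow]
  rw [Complex.mul_conj']

lemma norm_quadTuple_sub_le [Fintype ι] (T : ι → H →L[ℂ] H) (x y : H) :
    ‖quadTuple T x - quadTuple T y‖ ≤ ‖T‖ * (‖x‖ + ‖y‖) * ‖x - y‖ := by
  refine (pi_norm_le_iff_of_nonneg (by positivity)).2 fun j => ?_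
  have hle : ∀ v w : H, ‖⟪T j v, w⟫‖ ≤ ‖T‖ * ‖v‖ * ‖w‖ := fun v w =>
    (norm_inner_le_norm _ _).trans (by gcongr; exact (T j).le_of_opNorm_le (norm_le_pi_norm T j) v)
  calc ‖⟪T j x, x⟫ - ⟪T j y, y⟫‖ = ‖⟪T j x, x - y⟫ + ⟪T j (x - y), y⟫‖ := by
        simp only [map_sub, inner_sub_left, inner_sub_right, sub_add_sub_cancel]
    _ ≤ ‖T‖ * ‖x‖ * ‖x - y‖ + ‖T‖ * ‖x - y‖ * ‖y‖ :=
        (norm_add_le _ _).trans (add_le_add (hle _ _) (hle _ _))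
    _ = ‖T‖ * (‖x‖ + ‖y‖) * ‖x - y‖ := by ring

lemma norm_quadTuple_le [Fintype ι] (T : ι → H →L[ℂ] H) {x : H} (hx : ‖x‖ = 1) :
    ‖quadTuple T x‖ ≤ ‖T‖ := by
  have hzero : quadTuple T 0 = 0 := funext fun j => by simp [quadTuple]
  simpa [hzero, hx] using norm_quadTuple_sub_le T x 0

lemma jointEssNumRange_subset_closedBall {n : ℕ} (T : Fin n → H →L[ℂ] H) :
    jointEssNumRange T ⊆ closedBall 0 ‖T‖ := by
  rintro p ⟨x, hx, hT⟩
  have hlim : Tendsto (fun k => quadTuple T (x k)) atTop (nhds p) := tendsto_pi_nhds.2 hT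
  exact mem_closedBall_zero_iff.2
    (le_of_tendsto' hlim.norm fun k => norm_quadTuple_le T (hx.1 k))

lemma jointEssNumRange_subset_closure_jointNumRange_orthogonal {n : ℕ} (T : Fin n → H →L[ℂ] H)
    (F : Submodule ℂ H) [FiniteDimensional ℂ F] :
    jointEssNumRange T ⊆ closure (jointNumRange T Fᗮ) := by
  rintro p ⟨x, hx, hT⟩
  have hlim : Tendsto (fun k => quadTuple T (x k)) atTop (nhds p) := tendsto_pi_nhds.2 hT
  have hproj : Tendsto (fun k => F.starProjection (x k)) atTop (nhds 0) :=
    Nat.cofinite_eq_atTop ▸ tendsto_starProjection_cofinite_zero_of_orthonormal hx F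
  set y : ℕ → H := fun k => x k - F.starProjection (x k)
  have hnorm_y : Tendsto (‖y ·‖) atTop (nhds 1) := by
    refine tendsto_iff_norm_sub_tendsto_zero.2
      (squeeze_zero_norm (a := fun k => ‖F.starProjection (x k)‖) (fun k => ?_)
        (by simpa using hproj.norm))
    rw [norm_norm, Real.norm_eq_abs, ← hx.1 k]
    simpa [y] using abs_norm_sub_norm_le (y k) (x k)
  have hquad_y : Tendsto (fun k => quadTuple T (y k)) atTop (nhds p) := by
    have hbound : Tendsto (fun k => ‖T‖ * (‖y k‖ + 1) * ‖F.starProjection (x k)‖) atTop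
        (nhds 0) := by
      simpa using ((hnorm_y.add_const 1).const_mul ‖T‖).mul hproj.norm
    have hdiff : Tendsto (fun k => quadTuple T (y k) - quadTuple T (x k)) atTop (nhds 0) :=
      squeeze_zero_norm (fun k => by
        simpa [y, hx.1 k] using norm_quadTuple_sub_le T (y k) (x k)) hbound
    simpa using hdiff.add hlim
  have hquad_unit : Tendsto (fun k => quadTuple T ((‖y k‖⁻¹ : ℂ) • y k)) atTop (nhds p) := by
    simpa [quadTuple_smul] using ((hnorm_y.inv₀ one_ne_zero).pow 2).smul hquad_y
  refine mem_closure_of_tendsto hquad_unit ?_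
  filter_upwards [hnorm_y.eventually_const_lt one_pos] with k hk
  refine ⟨_, ⟨Submodule.smul_mem _ _ (F.sub_starProjection_mem_orthogonal _), ?_⟩, rfl⟩
  exact norm_smul_inv_norm (norm_pos_iff.1 hk)

variable [CompleteSpace H]

/-- The span of `b` and its images under the operators `T j` and their adjoints: the vectors
orthogonal to it have no cross terms with `b` in the quadratic forms of the `T j`. -/
noncomputable def couplingSpan (T : ι → H →L[ℂ] H) (b : H) : Submodule ℂ H :=
  Submodule.span ℂ (insert b ((Set.range fun j => T j b) ∪ Set.range fun j => (T j).adjoint b))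

instance [Finite ι] (T : ι → H →L[ℂ] H) (b : H) : FiniteDimensional ℂ (couplingSpan T b) :=
  FiniteDimensional.span_of_finite ℂ
    (((Set.finite_range _).union (Set.finite_range _)).insert _)

lemma self_mem_couplingSpan (T : ι → H →L[ℂ] H) (b : H) : b ∈ couplingSpan T b :=
  Submodule.subset_span (Set.mem_insert ..)

lemma quadTuple_smul_add_smul {T : ι → H →L[ℂ] H} {b v : H} (hv : v ∈ (couplingSpan T b)ᗮ)
    (α β : ℂ) : quadTuple T (α • b + β • v) =
      ‖α‖ ^ 2 • quadTuple T b + ‖β‖ ^ 2 • quadTuple T v := by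
  rw [← quadTuple_smul, ← quadTuple_smul]
  funext j
  have hbv : ⟪T j b, v⟫ = 0 :=
    hv _ (Submodule.subset_span (.inr (.inl (Set.mem_range_self j))))
  have hvb : ⟪T j v, b⟫ = 0 := by
    rw [← ContinuousLinearMap.adjoint_inner_right]
    exact Submodule.inner_left_of_mem_orthogonal
      (Submodule.subset_span (.inr (.inr (Set.mem_range_self j)))) hv
  simp only [quadTuple, Pi.add_apply, map_add, map_smul, inner_add_left, inner_add_right,
    inner_smul_left, inner_smul_right, hbv, hvb, mul_zero, add_zero, zero_add]

lemma exists_mem_orthogonal_quadTuple_eq_combination {T : ι → H →L[ℂ] H} {F : Submodule ℂ H}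
    {b : H} (hbF : b ∈ Fᗮ) (hb : ‖b‖ = 1) {p : ι → ℂ}
    (hp : p ∈ jointNumRange T (F ⊔ couplingSpan T b)ᗮ) {t : ℝ} (ht₀ : 0 ≤ t) (ht₁ : t ≤ 1) :
    ∃ u ∈ Fᗮ, ‖u‖ = 1 ∧ quadTuple T u = t • quadTuple T b + (1 - t) • p ∧ ⟪u, b⟫ = (√t : ℂ) := by
  obtain ⟨v, ⟨hv, hv₁⟩, rfl⟩ := hp
  have hvF : v ∈ Fᗮ := Submodule.orthogonal_le le_sup_left hv
  have hvb : v ∈ (couplingSpan T b)ᗮ := Submodule.orthogonal_le le_sup_right hv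
  have hbv : ⟪b, v⟫ = 0 := hvb b (self_mem_couplingSpan T b)
  refine ⟨(√t : ℂ) • b + (√(1 - t) : ℂ) • v,
    Fᗮ.add_mem (Fᗮ.smul_mem _ hbF) (Fᗮ.smul_mem _ hvF),
    norm_sqrt_smul_add_sqrt_smul_of_inner_eq_zero hb hv₁ hbv ht₀ ht₁, ?_, ?_⟩
  · rw [quadTuple_smul_add_smul hvb]
    simp [Real.sq_sqrt ht₀, Real.sq_sqrt (sub_nonneg.2 ht₁)]
  · rw [inner_add_left, inner_smul_left, inner_smul_left, inner_eq_zero_symm.1 hbv,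
      inner_self_eq_norm_sq_to_K, hb]
    simp

lemma segment_subset_jointNumRange_orthogonal {T : ι → H →L[ℂ] H} {F : Submodule ℂ H}
    {b : H} (hbF : b ∈ Fᗮ) (hb : ‖b‖ = 1) {p : ι → ℂ}
    (hp : p ∈ jointNumRange T (F ⊔ couplingSpan T b)ᗮ) :
    segment ℝ (quadTuple T b) p ⊆ jointNumRange T Fᗮ := by
  rintro _ ⟨t, t', ht₀, ht'₀, htt', rfl⟩
  obtain ⟨u, huF, hu, hquad, -⟩ :=
    exists_mem_orthogonal_quadTuple_eq_combination hbF hb hp ht₀ (by linarith)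
  exact ⟨u, ⟨huF, hu⟩, by rw [hquad, ← htt', add_sub_cancel_left]⟩

variable {n : ℕ} {T : Fin n → H →L[ℂ] H}

lemma exists_finite_convexHull_subset_jointNumRange_orthogonal {s : Set (Fin n → ℂ)}
    (hs : s.Finite) (hsT : s ⊆ jointEssNumRange T) {δ : ℝ} (hδ : 0 < δ)
    (F : Submodule ℂ H) [FiniteDimensional ℂ F] :
    ∃ S : Set (Fin n → ℂ), S.Finite ∧ s ⊆ thickening δ S ∧
      convexHull ℝ S ⊆ jointNumRange T Fᗮ := by
  induction s, hs using Set.Finite.induction_on generalizing F with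
  | empty => exact ⟨∅, Set.finite_empty, Set.empty_subset _, by simp⟩
  | @insert p s _ _ ih =>
    obtain ⟨_, ⟨b, ⟨hbF, hb⟩, rfl⟩, hpb⟩ := Metric.mem_closure_iff.1
      (jointEssNumRange_subset_closure_jointNumRange_orthogonal T F (hsT (s.mem_insert p))) δ hδ
    obtain ⟨S, hS, hsS, hhull⟩ := ih ((s.subset_insert p).trans hsT) (F ⊔ couplingSpan T b)
    refine ⟨insert (quadTuple T b) S, hS.insert _, Set.insert_subset ?_ ?_, ?_⟩
    · exact mem_thickening_iff.2 ⟨_, Set.mem_insert .., hpb⟩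
    · exact hsS.trans (thickening_subset_of_subset δ (S.subset_insert _))
    · rcases S.eq_empty_or_nonempty with rfl | hne
      · simpa using ⟨b, ⟨hbF, hb⟩, rfl⟩
      · simp only [convexHull_insert hne, convexJoin_singleton_left, Set.iUnion₂_subset_iff]
        exact fun q hq => segment_subset_jointNumRange_orthogonal hbF hb (hhull hq)

lemma interior_jointEssNumRange_subset_jointNumRange_orthogonal
    (F : Submodule ℂ H) [FiniteDimensional ℂ F] :
    interior (jointEssNumRange T) ⊆ jointNumRange T Fᗮ := by
  intro μ hμ
  obtain ⟨δ, hδ, hball⟩ := nhds_basis_closedBall.mem_iff.1 (mem_interior_iff_mem_nhds.1 hμ)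
  obtain ⟨s, hsball, hs, hcover⟩ := (isCompact_closedBall μ δ).finite_cover_balls (half_pos hδ)
  obtain ⟨S, hS, hsS, hhull⟩ := exists_finite_convexHull_subset_jointNumRange_orthogonal hs
    (hsball.trans hball) (half_pos hδ) F
  have hthick : closedBall μ δ ⊆ thickening δ S :=
    calc closedBall μ δ ⊆ thickening (δ / 2) s := by rwa [thickening_eq_biUnion_ball]
      _ ⊆ thickening (δ / 2) (thickening (δ / 2) S) := thickening_subset_of_subset _ hsS
      _ ⊆ thickening δ S := by
        simpa only [add_halves] using thickening_thickening_subset (δ / 2) (δ / 2) S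
  have hmem := mem_closure_convexHull_of_closedBall_subset_thickening hδ hthick
  rw [(hS.isClosed_convexHull ℝ).closure_eq] at hmem
  exact hhull hmem

lemma exists_mem_orthogonal_quadTuple_eq_of_mem_interior {lam : Fin n → ℂ}
    (hlam : lam ∈ interior (jointEssNumRange T)) {t : ℝ} (ht₀ : 0 ≤ t)
    (ht : t * (4 * ‖T‖ + 1) ≤ infDist lam (jointEssNumRange T)ᶜ)
    (M : Submodule ℂ H) [FiniteDimensional ℂ M] (z : H) :
    ∃ u ∈ Mᗮ, ‖u‖ = 1 ∧ quadTuple T u = lam ∧ t * infDist z M ^ 2 ≤ ‖⟪u, z⟫‖ ^ 2 := by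
  rw [infDist_eq_norm_sub_starProjection]
  set r := z - M.starProjection z with hr
  have hrM : r ∈ Mᗮ := M.sub_starProjection_mem_orthogonal z
  rcases eq_or_ne r 0 with hr₀ | hr₀
  · obtain ⟨u, ⟨huM, hu⟩, hquad⟩ :=
      interior_jointEssNumRange_subset_jointNumRange_orthogonal M hlam
    exact ⟨u, huM, hu, hquad, by simp [hr₀]⟩
  · set b : H := (‖r‖⁻¹ : ℂ) • r
    have hb : ‖b‖ = 1 := norm_smul_inv_norm hr₀
    obtain ⟨ht₁, μ, hμ, hcomb⟩ := exists_mem_interior_convex_combination_eq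
      (jointEssNumRange_subset_closedBall T) hlam (norm_quadTuple_le T hb) ht₀ ht
    obtain ⟨u, huM, hu, hquad, hub⟩ := exists_mem_orthogonal_quadTuple_eq_combination
      (Mᗮ.smul_mem _ hrM) hb
      (interior_jointEssNumRange_subset_jointNumRange_orthogonal (M ⊔ couplingSpan T b) hμ)
      ht₀ ht₁.le
    refine ⟨u, huM, hu, hquad.trans hcomb, le_of_eq ?_⟩
    have hrb : r = (‖r‖ : ℂ) • b := by
      rw [smul_inv_smul₀ (Complex.ofReal_ne_zero.2 (norm_ne_zero_iff.2 hr₀))]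
    have hur : ⟪u, z⟫ = ‖r‖ * √t :=
      calc ⟪u, z⟫ = ⟪u, r⟫ := by
            rw [hr, inner_sub_right, Submodule.inner_left_of_mem_orthogonal
              (M.starProjection_apply_mem z) huM, sub_zero]
        _ = ‖r‖ * √t := by rw [hrb, inner_smul_right, hub, ← hrb]
    rw [hur, norm_mul, Complex.norm_real, Complex.norm_real, norm_norm,
      Real.norm_of_nonneg (Real.sqrt_nonneg t), mul_pow, Real.sq_sqrt ht₀, mul_comm]

end JointNumericalRange

theorem stmt_2 {H : Type*} [NormedAddCommGroup H] [InnerProductSpace ℂ H]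
    [CompleteSpace H] [TopologicalSpace.SeparableSpace H]
    (hdim : ¬ FiniteDimensional ℂ H)
    {n : ℕ} (T : Fin n → H →L[ℂ] H)
    (lam : ℕ → Fin n → ℂ)
    (hmem : ∀ k, lam k ∈ interior (jointEssNumRange T))
    (hblaschke : Tendsto
      (fun N => ∑ k ∈ Finset.range N, Metric.infDist (lam k) ((jointEssNumRange T)ᶜ))
      atTop atTop) :
    ∃ u : HilbertBasis ℕ ℂ H, ∀ k j, ⟪(T j) (u k), u k⟫ = lam k j := by
  have hR : 0 < 4 * ‖T‖ + 1 := by positivity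
  set t : ℕ → ℝ := fun k => infDist (lam k) (jointEssNumRange T)ᶜ / (4 * ‖T‖ + 1)
  have ht₀ : ∀ k, 0 ≤ t k := fun k => div_nonneg infDist_nonneg hR.le
  have ht : ∀ k, t k * (4 * ‖T‖ + 1) ≤ infDist (lam k) (jointEssNumRange T)ᶜ := fun k =>
    (div_mul_cancel₀ _ hR.ne').le
  have hdiv : Tendsto (fun N => ∑ k ∈ Finset.range N, t k) atTop atTop := by
    simpa only [Finset.sum_div] using hblaschke.atTop_div_const hR
  obtain ⟨u, hu⟩ := exists_hilbertBasis_of_forall_exists_mem_orthogonal (𝕜 := ℂ)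
    (Q := fun k x => quadTuple T x = lam k) ht₀ hdiv fun k M _ z =>
      exists_mem_orthogonal_quadTuple_eq_of_mem_interior (hmem k) (ht₀ k) (ht k) M z
  exact ⟨u, fun k j => congrFun (hu k) j⟩
end

section
/- Let H be a complex separable infinite-dimensional Hilbert space, 𝒯 = (T_1, …, T_n) an n-tuple of bounded operators on H, and p > 1. Let (λ_k)_{k≥1} ⊂ ℂ^n satisfy ∑_{k=1}^∞ dist(λ_k, W_e(𝒯))^p < ∞. Then there exists an orthonormal basis (u_k)_{k≥1} of H such that ∑_{k=1}^∞ (max_{1≤j≤n} |⟨T_j u_k, u_k⟩ − λ_{k,j}|)^p < ∞. (Equivalently: defining the tuple 𝒦 = (K_1, …, K_n) diagonal in the basis (u_k) by K_j u_k = (λ_{k,j} − ⟨T_j u_k, u_k⟩) u_k, each K_j belongs to the Schatten class S_p and (λ_k)_{k≥1} is a diagonal of 𝒯 + 𝒦.) -/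
open Filter Metric
open scoped ComplexInnerProductSpace

/-!
Replace each `λ_k` by a nearby `μ_k ∈ W_e(𝒯)`; by Minkowski's inequality it suffices to find a basis
whose diagonal is `p`-summably close to `(μ_k)`. A unit vector `e` orthogonal to the basis vectors
chosen so far is absorbed by a block of `N` new ones as follows. Choose orthonormal vectors `x_i`
realising the targets `μ_i` up to `1/N` and decoupled by `𝒯` from each other, from `e` and from the
previous vectors. Adding the common shift `v = N^(-1/2) e - N⁻¹ ∑ x_i` keeps them orthonormal and
puts `e` into their span, and since `‖v‖² = 2/N` every diagonal entry is off by only `O(1/N)`. The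
block costs `N · O(N^(-p))`, which tends to `0` because `p > 1`, so the vectors of a dense sequence
can be absorbed one after another at costs `2^(-m)`.
-/

open scoped InnerProductSpace Topology

section Sequences

lemma exists_eqOn_of_eqOn_succ {α : Type*} {K : ℕ → ℕ} (hK : StrictMono K) {U : ℕ → ℕ → α}
    (hU : ∀ m, Set.EqOn (U (m + 1)) (U m) (Finset.range (K m))) :
    ∃ v : ℕ → α, ∀ m, Set.EqOn v (U m) (Finset.range (K m)) := by
  have hmono {m l : ℕ} (hml : m ≤ l) : Set.EqOn (U l) (U m) (Finset.range (K m)) := by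
    induction l, hml using Nat.le_induction with
    | base => exact Set.eqOn_refl _ _
    | succ l hml ih =>
      exact ((hU l).mono (Finset.coe_subset.2 (Finset.range_mono (hK.monotone hml)))).trans ih
  refine ⟨fun k => U (k + 1) k, fun m k hk => ?_⟩
  rcases le_total m (k + 1) with h | h
  · exact hmono h hk
  · exact (hmono h (Finset.mem_coe.2 (Finset.mem_range.2 hK.le_apply))).symm

lemma summable_of_sum_Ico_le {a b : ℕ → ℝ} {K : ℕ → ℕ} (hK : StrictMono K) (ha : ∀ i, 0 ≤ a i)
    (hb : Summable b) (h : ∀ m, ∑ i ∈ Finset.Ico (K m) (K (m + 1)), a i ≤ b m) : Summable a := by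
  have hb_nonneg (m : ℕ) : 0 ≤ b m := (Finset.sum_nonneg fun i _ => ha i).trans (h m)
  have hsum (m : ℕ) : ∑ i ∈ Finset.range (K m), a i ≤
      ∑ i ∈ Finset.range (K 0), a i + ∑ i ∈ Finset.range m, b i := by
    induction m with
    | zero => simp
    | succ m ih =>
      rw [← Finset.sum_range_add_sum_Ico _ (hK.monotone m.le_succ), Finset.sum_range_succ]
      linarith [h m]
  refine summable_of_sum_range_le (c := ∑ i ∈ Finset.range (K 0), a i + ∑' m, b m) ha fun m => ?_
  calc ∑ i ∈ Finset.range m, a i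
      ≤ ∑ i ∈ Finset.range (K m), a i :=
        Finset.sum_le_sum_of_subset_of_nonneg (Finset.range_mono hK.le_apply) fun i _ _ => ha i
    _ ≤ ∑ i ∈ Finset.range (K 0), a i + ∑ i ∈ Finset.range m, b i := hsum m
    _ ≤ ∑ i ∈ Finset.range (K 0), a i + ∑' m, b m := by
        gcongr
        exact hb.sum_le_tsum _ fun i _ => hb_nonneg i

lemma tendsto_natCast_mul_div_rpow_zero {C p : ℝ} (hC : 0 ≤ C) (hp : 1 < p) :
    Tendsto (fun N : ℕ => N * (C / N) ^ p) atTop (𝓝 0) := by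
  have hlim : Tendsto (fun N : ℕ => C ^ p * (N : ℝ) ^ (-(p - 1))) atTop (𝓝 0) := by
    simpa using ((tendsto_rpow_neg_atTop (sub_pos.2 hp)).comp
      tendsto_natCast_atTop_atTop).const_mul (C ^ p)
  refine hlim.congr' ?_
  filter_upwards [eventually_gt_atTop 0] with N hN
  have hN' : (0 : ℝ) < N := Nat.cast_pos.2 hN
  rw [Real.div_rpow hC hN'.le, neg_sub, Real.rpow_sub hN', Real.rpow_one]
  ring

lemma exists_seq_mem_summable_dist_rpow {X : Type*} [PseudoMetricSpace X] {A : Set X}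
    (hA : A.Nonempty) {p : ℝ} (hp : 0 < p) {a : ℕ → X}
    (ha : Summable fun k => infDist (a k) A ^ p) :
    ∃ b : ℕ → X, (∀ k, b k ∈ A) ∧ Summable fun k => dist (a k) (b k) ^ p := by
  have hnear (k : ℕ) : ∃ y ∈ A, dist (a k) y ^ p < infDist (a k) A ^ p + (1 / 2 : ℝ) ^ k := by
    have hpos : 0 ≤ infDist (a k) A ^ p + (1 / 2 : ℝ) ^ k :=
      add_nonneg (Real.rpow_nonneg infDist_nonneg p) (by positivity)
    have hlt : infDist (a k) A < (infDist (a k) A ^ p + (1 / 2 : ℝ) ^ k) ^ p⁻¹ :=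
      (Real.lt_rpow_inv_iff_of_pos infDist_nonneg hpos hp).2 (lt_add_of_pos_right _ (by positivity))
    obtain ⟨y, hy, hdist⟩ := (infDist_lt_iff hA).1 hlt
    exact ⟨y, hy, (Real.lt_rpow_inv_iff_of_pos dist_nonneg hpos hp).1 hdist⟩
  choose b hbA hb using hnear
  exact ⟨b, hbA, (ha.add summable_geometric_two).of_nonneg_of_le (fun k => by positivity)
    fun k => (hb k).le⟩

end Sequences

section OrthonormalFamilies

variable {𝕜 E ι : Type*} [RCLike 𝕜] [NormedAddCommGroup E] [InnerProductSpace 𝕜 E]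

lemma orthonormal_union [DecidableEq ι] {f : ι → E} {s t : Finset ι}
    (hs : Orthonormal 𝕜 fun i : s => f i) (ht : Orthonormal 𝕜 fun i : t => f i)
    (hst : ∀ i ∈ s, ∀ j ∈ t, ⟪f i, f j⟫_𝕜 = 0) :
    Orthonormal 𝕜 fun i : ↥(s ∪ t) => f i := by
  constructor
  · rintro ⟨i, hi⟩
    rcases Finset.mem_union.1 hi with hi | hi
    · exact hs.1 ⟨i, hi⟩
    · exact ht.1 ⟨i, hi⟩
  · rintro ⟨i, hi⟩ ⟨j, hj⟩ hij
    have hij : i ≠ j := fun h => hij (Subtype.ext h)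
    rcases Finset.mem_union.1 hi with hi | hi <;> rcases Finset.mem_union.1 hj with hj | hj
    · exact hs.2 (i := ⟨i, hi⟩) (j := ⟨j, hj⟩) fun h => hij (congrArg Subtype.val h)
    · exact hst i hi j hj
    · exact inner_eq_zero_symm.1 (hst j hj i hi)
    · exact ht.2 (i := ⟨i, hi⟩) (j := ⟨j, hj⟩) fun h => hij (congrArg Subtype.val h)

lemma orthonormal_of_forall_range {v : ℕ → E} {K : ℕ → ℕ} (hK : StrictMono K)
    (h : ∀ m, Orthonormal 𝕜 fun i : Finset.range (K m) => v i) : Orthonormal 𝕜 v := by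
  have hmem (i m : ℕ) (him : i < m) : i ∈ Finset.range (K m) :=
    Finset.mem_range.2 (him.trans_le hK.le_apply)
  refine ⟨fun i => (h (i + 1)).1 ⟨i, hmem i _ i.lt_succ_self⟩, fun i j hij => ?_⟩
  exact (h (max i j + 1)).2 (i := ⟨i, hmem i _ (by omega)⟩) (j := ⟨j, hmem j _ (by omega)⟩)
    fun h => hij (congrArg Subtype.val h)

lemma tendsto_starProjection_zero {x : ι → E} (hx : Orthonormal 𝕜 x) (S : Submodule 𝕜 E)
    [FiniteDimensional 𝕜 S] : Tendsto (fun k => S.starProjection (x k)) cofinite (𝓝 0) := by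
  have hweak (f : E) : Tendsto (fun k => ⟪f, x k⟫_𝕜) cofinite (𝓝 0) := by
    rw [tendsto_zero_iff_norm_tendsto_zero]
    simpa [norm_inner_symm] using (hx.inner_products_summable f).tendsto_cofinite_zero.sqrt
  let b := stdOrthonormalBasis 𝕜 S
  have hexpand (k : ι) : S.starProjection (x k) = ∑ i, ⟪(b i : E), x k⟫_𝕜 • (b i : E) := by
    rw [Submodule.starProjection_apply, b.orthogonalProjectionOnto_apply_eq_sum]
    simp
  simp_rw [hexpand]
  simpa using tendsto_finsetSum Finset.univ fun i _ => (hweak (b i)).smul_const (b i : E)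

lemma exists_norm_eq_one_mem_orthogonal_mem_sup (hdim : ¬ FiniteDimensional 𝕜 E)
    (S : Submodule 𝕜 E) [FiniteDimensional 𝕜 S] (y : E) :
    ∃ e ∈ Sᗮ, ‖e‖ = 1 ∧ y ∈ S ⊔ 𝕜 ∙ e := by
  obtain ⟨z, hzS, hyz⟩ : ∃ z ∉ S, y ∈ S ⊔ 𝕜 ∙ z := by
    by_cases hy : y ∈ S
    · have hS : S ≠ ⊤ := by
        rintro rfl
        exact hdim (Module.finite_def.2 (Module.Finite.iff_fg.1 ‹_›))
      obtain ⟨z, -, hz⟩ := SetLike.exists_of_lt hS.lt_top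
      exact ⟨z, hz, Submodule.mem_sup_left hy⟩
    · exact ⟨y, hy, Submodule.mem_sup_right (Submodule.mem_span_singleton_self y)⟩
  set r : E := z - S.starProjection z
  have hr0 : r ≠ 0 := fun h => hzS (sub_eq_zero.1 h ▸ S.starProjection_apply_mem z)
  refine ⟨(‖r‖⁻¹ : 𝕜) • r, Sᗮ.smul_mem _ (S.sub_starProjection_mem_orthogonal z),
    norm_smul_inv_norm hr0, ?_⟩
  have hzr : z ∈ S ⊔ 𝕜 ∙ ((‖r‖⁻¹ : 𝕜) • r) := by
    rw [Submodule.span_singleton_smul_eq (by simpa using hr0),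
      ← add_sub_cancel (S.starProjection z) z]
    exact Submodule.add_mem_sup (S.starProjection_apply_mem z) (Submodule.mem_span_singleton_self r)
  exact sup_le le_sup_left ((Submodule.span_singleton_le_iff_mem _ _).2 hzr) hyz

lemma exists_orthonormal_nat (hdim : ¬ FiniteDimensional 𝕜 E) :
    ∃ x : ℕ → E, Orthonormal 𝕜 x := by
  have : Std.Symm fun x y : E => ⟪x, y⟫_𝕜 = 0 := ⟨fun _ _ => inner_eq_zero_symm.1⟩
  obtain ⟨x, hnorm, horth⟩ := exists_seq_of_forall_finset_exists' (fun x : E => ‖x‖ = 1)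
    (fun x y => ⟪x, y⟫_𝕜 = 0) fun s _ => by
      obtain ⟨e, heS, he, -⟩ := exists_norm_eq_one_mem_orthogonal_mem_sup hdim
        (Submodule.span 𝕜 (s : Set E)) 0
      exact ⟨e, he, fun x hx => heS x (Submodule.subset_span hx)⟩
  exact ⟨x, hnorm, horth⟩

end OrthonormalFamilies

section Spreading

variable {𝕜 E ι : Type*} [RCLike 𝕜] [NormedAddCommGroup E] [InnerProductSpace 𝕜 E] [Fintype ι]

variable (𝕜) in
/-- The common shift `v = N^(-1/2) e - N⁻¹ ∑ i, x i` by which `N = card ι` orthonormal vectors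
`x i`, all orthogonal to a unit vector `e`, are moved to orthonormal vectors `x i + v` whose span
contains `e`. -/
noncomputable def spreadShift (x : ι → E) (e : E) : E :=
  (√(Fintype.card ι) : 𝕜)⁻¹ • e - (Fintype.card ι : 𝕜)⁻¹ • ∑ i, x i

lemma inner_spreadShift_right {x : ι → E} {e y : E} {i : ι} (he : ⟪y, e⟫_𝕜 = 0)
    (hx : ∀ j, j ≠ i → ⟪y, x j⟫_𝕜 = 0) :
    ⟪y, spreadShift 𝕜 x e⟫_𝕜 = -((Fintype.card ι : 𝕜)⁻¹ * ⟪y, x i⟫_𝕜) := by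
  have hsum : ∑ j, ⟪y, x j⟫_𝕜 = ⟪y, x i⟫_𝕜 :=
    Finset.sum_eq_single_of_mem i (Finset.mem_univ i) fun j _ => hx j
  simp [spreadShift, inner_sub_right, inner_smul_right, inner_sum, he, hsum]

lemma inner_spreadShift_left {x : ι → E} {e y : E} {i : ι} (he : ⟪y, e⟫_𝕜 = 0)
    (hx : ∀ j, j ≠ i → ⟪y, x j⟫_𝕜 = 0) :
    ⟪spreadShift 𝕜 x e, y⟫_𝕜 = -((Fintype.card ι : 𝕜)⁻¹ * ⟪x i, y⟫_𝕜) := by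
  rw [← inner_conj_symm, inner_spreadShift_right he hx]
  simp

lemma sum_add_spreadShift [Nonempty ι] (x : ι → E) (e : E) :
    ∑ i, (x i + spreadShift 𝕜 x e) = (√(Fintype.card ι) : 𝕜) • e := by
  have hN : (Fintype.card ι : 𝕜) ≠ 0 := Nat.cast_ne_zero.2 Fintype.card_ne_zero
  have hsqrt : (Fintype.card ι : 𝕜) * (√(Fintype.card ι) : 𝕜)⁻¹ = (√(Fintype.card ι) : 𝕜) := by
    rw [← div_eq_mul_inv, ← RCLike.ofReal_natCast, ← RCLike.ofReal_div, Real.div_sqrt]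
  rw [Finset.sum_add_distrib, Finset.sum_const, Finset.card_univ, ← Nat.cast_smul_eq_nsmul 𝕜,
    spreadShift, smul_sub, smul_smul, smul_smul, hsqrt, mul_inv_cancel₀ hN, one_smul,
    add_sub_cancel]

lemma mem_span_range_add_spreadShift [Nonempty ι] (x : ι → E) (e : E) :
    e ∈ Submodule.span 𝕜 (Set.range fun i => x i + spreadShift 𝕜 x e) := by
  have hsqrt : (√(Fintype.card ι) : 𝕜) ≠ 0 := by simp
  rw [← Submodule.smul_mem_iff _ hsqrt, ← sum_add_spreadShift x e]
  exact Submodule.sum_mem _ fun i _ => Submodule.subset_span ⟨i, rfl⟩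

lemma norm_sq_spreadShift [Nonempty ι] {x : ι → E} {e : E} (hx : Orthonormal 𝕜 x)
    (he : ‖e‖ = 1) (hxe : ∀ i, ⟪x i, e⟫_𝕜 = 0) :
    ‖spreadShift 𝕜 x e‖ ^ 2 = 2 / Fintype.card ι := by
  have hN : (0 : ℝ) < Fintype.card ι := Nat.cast_pos.2 Fintype.card_pos
  have horth : ⟪∑ i, x i, e⟫_𝕜 = 0 := by simp [sum_inner, hxe]
  have hsum : ‖∑ i, x i‖ ^ 2 = Fintype.card ι := by
    have := hx.inner_sum (fun _ => (1 : 𝕜)) (fun _ => 1) Finset.univ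
    simp only [one_smul, map_one, mul_one, Finset.sum_const, Finset.card_univ, nsmul_eq_mul] at this
    rw [inner_self_eq_norm_sq_to_K] at this
    exact_mod_cast this
  rw [spreadShift, @norm_sub_sq 𝕜, inner_smul_left, inner_smul_right, inner_eq_zero_symm.1 horth,
    norm_smul, norm_smul, mul_pow, mul_pow, hsum, he]
  simp only [norm_inv, RCLike.norm_ofReal, abs_of_nonneg (Real.sqrt_nonneg _), inv_pow,
    Real.sq_sqrt hN.le, RCLike.norm_natCast, mul_zero, map_zero]
  field_simp
  norm_num

lemma orthonormal_add_spreadShift {x : ι → E} {e : E} (hx : Orthonormal 𝕜 x)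
    (he : ‖e‖ = 1) (hxe : ∀ i, ⟪x i, e⟫_𝕜 = 0) :
    Orthonormal 𝕜 fun i => x i + spreadShift 𝕜 x e := by
  classical
  rw [orthonormal_iff_ite]
  intro i j
  have : Nonempty ι := ⟨i⟩
  have hright : ⟪x i, spreadShift 𝕜 x e⟫_𝕜 = -(Fintype.card ι : 𝕜)⁻¹ := by
    rw [inner_spreadShift_right (hxe i) fun k hk => hx.2 hk.symm]
    simp [hx.1 i]
  have hleft : ⟪spreadShift 𝕜 x e, x j⟫_𝕜 = -(Fintype.card ι : 𝕜)⁻¹ := by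
    rw [inner_spreadShift_left (hxe j) fun k hk => hx.2 hk.symm]
    simp [hx.1 j]
  have hself : ⟪spreadShift 𝕜 x e, spreadShift 𝕜 x e⟫_𝕜 = 2 * (Fintype.card ι : 𝕜)⁻¹ := by
    rw [inner_self_eq_norm_sq_to_K, ← RCLike.ofReal_pow, norm_sq_spreadShift hx he hxe,
      div_eq_mul_inv, RCLike.ofReal_mul, RCLike.ofReal_inv, RCLike.ofReal_natCast,
      RCLike.ofReal_ofNat]
  rw [inner_add_left, inner_add_right, inner_add_right, hright, hleft, hself,
    orthonormal_iff_ite.1 hx]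
  ring

end Spreading

section JointQuadForm

variable {𝕜 E ι κ : Type*} [RCLike 𝕜] [NormedAddCommGroup E] [InnerProductSpace 𝕜 E]

/-- The tuple `(⟨T_j x, x⟩)_j` of the quadratic forms of the operators `T_j` at `x`. -/
def jointQuadForm (T : κ → E →L[𝕜] E) (x : E) : κ → 𝕜 := fun j => ⟪T j x, x⟫_𝕜

/-- Two vectors are decoupled by a tuple of operators if they are orthogonal and the compression
of every operator to their span has no off-diagonal entries. -/
def Decoupled (T : κ → E →L[𝕜] E) (x y : E) : Prop :=
  ⟪x, y⟫_𝕜 = 0 ∧ ∀ j, ⟪T j x, y⟫_𝕜 = 0 ∧ ⟪T j y, x⟫_𝕜 = 0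

lemma Decoupled.symm {T : κ → E →L[𝕜] E} {x y : E} (h : Decoupled T x y) : Decoupled T y x :=
  ⟨inner_eq_zero_symm.1 h.1, fun j => (h.2 j).symm⟩

lemma exists_finiteDimensional_forall_decoupled [CompleteSpace E] [Finite κ]
    (T : κ → E →L[𝕜] E) (S : Submodule 𝕜 E) [FiniteDimensional 𝕜 S] :
    ∃ M : Submodule 𝕜 E, FiniteDimensional 𝕜 M ∧ ∀ z ∈ S, ∀ x ∈ Mᗮ, Decoupled T z x := by
  refine ⟨S ⊔ ⨆ j, (S.map (T j : E →ₗ[𝕜] E) ⊔ S.map ((T j).adjoint : E →ₗ[𝕜] E)),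
    inferInstance, fun z hz x hx => ⟨hx z (Submodule.mem_sup_left hz), fun j => ⟨?_, ?_⟩⟩⟩
  · exact hx _ (Submodule.mem_sup_right (Submodule.mem_iSup_of_mem j
      (Submodule.mem_sup_left (Submodule.mem_map_of_mem hz))))
  · rw [← ContinuousLinearMap.adjoint_inner_right, inner_eq_zero_symm]
    exact hx _ (Submodule.mem_sup_right (Submodule.mem_iSup_of_mem j
      (Submodule.mem_sup_right (Submodule.mem_map_of_mem hz))))

lemma jointQuadForm_smul (T : κ → E →L[𝕜] E) (c : 𝕜) (x : E) :
    jointQuadForm T (c • x) = ((‖c‖ : 𝕜) ^ 2) • jointQuadForm T x := by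
  ext j
  simp only [jointQuadForm, map_smul, inner_smul_left, inner_smul_right, Pi.smul_apply,
    smul_eq_mul, ← RCLike.conj_mul]
  ring

lemma jointQuadForm_add (T : κ → E →L[𝕜] E) (x z : E) :
    jointQuadForm T (x + z) =
      jointQuadForm T x + (fun j => ⟪T j x, z⟫_𝕜 + ⟪T j z, x⟫_𝕜) + jointQuadForm T z := by
  ext j
  simp only [jointQuadForm, map_add, inner_add_left, inner_add_right, Pi.add_apply]
  ring

lemma jointQuadForm_add_spreadShift [CompleteSpace E] [Fintype ι] (T : κ → E →L[𝕜] E)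
    {x : ι → E} {e : E} (hx : Pairwise fun i j => Decoupled T (x i) (x j))
    (hxe : ∀ i, Decoupled T e (x i)) (i : ι) :
    jointQuadForm T (x i + spreadShift 𝕜 x e) = jointQuadForm T (x i)
      - (2 / Fintype.card ι : 𝕜) • jointQuadForm T (x i) + jointQuadForm T (spreadShift 𝕜 x e) := by
  have hright (j : κ) : ⟪T j (x i), spreadShift 𝕜 x e⟫_𝕜 =
      -((Fintype.card ι : 𝕜)⁻¹ * ⟪T j (x i), x i⟫_𝕜) :=
    inner_spreadShift_right ((hxe i).2 j).2 fun k hk => ((hx hk).2 j).2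
  have hleft (j : κ) : ⟪T j (spreadShift 𝕜 x e), x i⟫_𝕜 =
      -((Fintype.card ι : 𝕜)⁻¹ * ⟪T j (x i), x i⟫_𝕜) := by
    simp only [← ContinuousLinearMap.adjoint_inner_right (T j)]
    refine inner_spreadShift_left ?_ fun k hk => ?_ <;>
      rw [inner_eq_zero_symm, ContinuousLinearMap.adjoint_inner_right]
    · exact ((hxe i).2 j).1
    · exact ((hx hk).2 j).1
  rw [jointQuadForm_add]
  ext j
  simp only [jointQuadForm, Pi.add_apply, Pi.sub_apply, Pi.smul_apply, smul_eq_mul, hright, hleft]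
  ring

variable [Fintype κ]

lemma norm_inner_apply_le (T : κ → E →L[𝕜] E) (j : κ) (x y : E) :
    ‖⟪T j x, y⟫_𝕜‖ ≤ ‖T‖ * (‖x‖ * ‖y‖) :=
  calc ‖⟪T j x, y⟫_𝕜‖ ≤ ‖T j x‖ * ‖y‖ := norm_inner_le_norm _ _
    _ ≤ ‖T‖ * ‖x‖ * ‖y‖ := by
        gcongr
        exact (T j).le_of_opNorm_le (norm_le_pi_norm T j) x
    _ = ‖T‖ * (‖x‖ * ‖y‖) := mul_assoc _ _ _

lemma norm_jointQuadForm_le (T : κ → E →L[𝕜] E) (x : E) :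
    ‖jointQuadForm T x‖ ≤ ‖T‖ * ‖x‖ ^ 2 :=
  (pi_norm_le_iff_of_nonneg (by positivity)).2 fun j => by
    simpa only [sq, jointQuadForm] using norm_inner_apply_le T j x x

lemma norm_jointQuadForm_add_sub_le (T : κ → E →L[𝕜] E) (x z : E) :
    ‖jointQuadForm T (x + z) - jointQuadForm T x‖ ≤ ‖T‖ * (‖z‖ * (2 * ‖x‖ + ‖z‖)) := by
  have hcross : ‖fun j => ⟪T j x, z⟫_𝕜 + ⟪T j z, x⟫_𝕜‖ ≤ ‖T‖ * (2 * ‖x‖ * ‖z‖) :=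
    (pi_norm_le_iff_of_nonneg (by positivity)).2 fun j => by
      linarith [norm_add_le ⟪T j x, z⟫_𝕜 ⟪T j z, x⟫_𝕜, norm_inner_apply_le T j x z,
        norm_inner_apply_le T j z x]
  rw [jointQuadForm_add, add_assoc, add_sub_cancel_left]
  linarith [norm_add_le (fun j => ⟪T j x, z⟫_𝕜 + ⟪T j z, x⟫_𝕜) (jointQuadForm T z),
    norm_jointQuadForm_le T z]

lemma norm_jointQuadForm_add_spreadShift_sub_le [CompleteSpace E] [Fintype ι]
    (T : κ → E →L[𝕜] E) {x : ι → E} {e : E} (hx : ∀ i, ‖x i‖ = 1) (he : ‖e‖ = 1)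
    (hT : Pairwise fun i j => Decoupled T (x i) (x j)) (hTe : ∀ i, Decoupled T e (x i)) (i : ι) :
    ‖jointQuadForm T (x i + spreadShift 𝕜 x e) - jointQuadForm T (x i)‖ ≤
      4 * ‖T‖ / Fintype.card ι := by
  have : Nonempty ι := ⟨i⟩
  have hshift : ‖jointQuadForm T (spreadShift 𝕜 x e)‖ ≤ ‖T‖ * (2 / Fintype.card ι) := by
    rw [← norm_sq_spreadShift (𝕜 := 𝕜) ⟨hx, fun i j hij => (hT hij).1⟩ he fun i => (hTe i).symm.1]
    exact norm_jointQuadForm_le T _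
  have hdiag : ‖(2 / Fintype.card ι : 𝕜) • jointQuadForm T (x i)‖ ≤
      2 / Fintype.card ι * ‖T‖ := by
    rw [norm_smul, norm_div, RCLike.norm_ofNat, RCLike.norm_natCast]
    gcongr
    simpa [hx i] using norm_jointQuadForm_le T (x i)
  calc ‖jointQuadForm T (x i + spreadShift 𝕜 x e) - jointQuadForm T (x i)‖
      = ‖jointQuadForm T (spreadShift 𝕜 x e) -
          (2 / Fintype.card ι : 𝕜) • jointQuadForm T (x i)‖ := by
        rw [jointQuadForm_add_spreadShift T hT hTe]
        congr 1
        abel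
    _ ≤ ‖T‖ * (2 / Fintype.card ι) + 2 / Fintype.card ι * ‖T‖ := norm_sub_le_of_le hshift hdiag
    _ = 4 * ‖T‖ / Fintype.card ι := by ring

end JointQuadForm

section EssentialNumericalRange

variable {H κ : Type*} [NormedAddCommGroup H] [InnerProductSpace ℂ H] {n : ℕ}
  {T : Fin n → H →L[ℂ] H}

lemma mem_jointEssNumRange_iff {mu : Fin n → ℂ} :
    mu ∈ jointEssNumRange T ↔ ∃ x : ℕ → H, Orthonormal ℂ x ∧
      Tendsto (fun k => jointQuadForm T (x k)) atTop (𝓝 mu) :=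
  exists_congr fun _ => and_congr_right fun _ => tendsto_pi_nhds.symm

lemma jointEssNumRange_nonempty (hdim : ¬ FiniteDimensional ℂ H) (T : Fin n → H →L[ℂ] H) :
    (jointEssNumRange T).Nonempty := by
  obtain ⟨x, hx⟩ := exists_orthonormal_nat hdim
  have hbound (k : ℕ) : jointQuadForm T (x k) ∈ closedBall 0 ‖T‖ := by
    simpa [hx.1 k] using norm_jointQuadForm_le T (x k)
  obtain ⟨mu, -, φ, hφ, hlim⟩ := tendsto_subseq_of_bounded isBounded_closedBall hbound
  exact ⟨mu, mem_jointEssNumRange_iff.2 ⟨x ∘ φ, hx.comp φ hφ.injective, hlim⟩⟩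

lemma exists_mem_orthogonal_of_mem_jointEssNumRange {mu : Fin n → ℂ}
    (hmu : mu ∈ jointEssNumRange T) (S : Submodule ℂ H) [FiniteDimensional ℂ S] {δ : ℝ}
    (hδ : 0 < δ) : ∃ x ∈ Sᗮ, ‖x‖ = 1 ∧ ‖jointQuadForm T x - mu‖ ≤ δ := by
  obtain ⟨x, hx, hlim⟩ := mem_jointEssNumRange_iff.1 hmu
  have hproj : Tendsto (fun k => -S.starProjection (x k)) atTop (𝓝 0) := by
    simpa [Nat.cofinite_eq_atTop] using (tendsto_starProjection_zero hx S).neg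
  set z : ℕ → H := fun k => x k + -S.starProjection (x k) with hz
  have hz_norm : Tendsto (fun k => ‖z k‖) atTop (𝓝 1) := by
    refine tendsto_of_tendsto_of_dist (tendsto_const_nhds (x := (1 : ℝ)))
      (squeeze_zero (fun _ => dist_nonneg) (fun k => ?_) (by simpa using hproj.norm))
    simpa [Real.dist_eq, hz, hx.1 k] using abs_norm_sub_norm_le (x k) (z k)
  have hz_form : Tendsto (fun k => jointQuadForm T (z k)) atTop (𝓝 mu) := by
    have hbound : Tendsto (fun k => ‖T‖ * (‖-S.starProjection (x k)‖ *
        (2 * ‖x k‖ + ‖-S.starProjection (x k)‖))) atTop (𝓝 0) := by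
      simpa [hx.1] using (hproj.norm.mul (hproj.norm.const_add 2)).const_mul ‖T‖
    simpa using hlim.add
      (squeeze_zero_norm (fun k => norm_jointQuadForm_add_sub_le T (x k) _) hbound)
  have hlim' : Tendsto (fun k => jointQuadForm T ((‖z k‖⁻¹ : ℂ) • z k)) atTop (𝓝 mu) := by
    have hscale : Tendsto (fun k => (‖z k‖⁻¹ : ℂ) ^ 2) atTop (𝓝 1) := by
      simpa using ((Complex.continuous_ofReal.tendsto 1).comp hz_norm).inv₀ (by simp) |>.pow 2
    simpa [jointQuadForm_smul] using hscale.smul hz_form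
  obtain ⟨k, hk, hk0⟩ := ((hlim'.eventually (closedBall_mem_nhds mu hδ)).and
    (hz_norm.eventually_ne one_ne_zero)).exists
  refine ⟨(‖z k‖⁻¹ : ℂ) • z k, Sᗮ.smul_mem _ ?_, norm_smul_inv_norm (norm_ne_zero_iff.1 hk0),
    mem_closedBall_iff_norm.1 hk⟩
  simpa only [hz, ← sub_eq_add_neg] using S.sub_starProjection_mem_orthogonal (x k)

variable [CompleteSpace H]

lemma exists_decoupled_of_mem_jointEssNumRange {mu : Fin n → ℂ}
    (hmu : mu ∈ jointEssNumRange T) (S : Submodule ℂ H) [FiniteDimensional ℂ S] {δ : ℝ}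
    (hδ : 0 < δ) :
    ∃ x, ‖x‖ = 1 ∧ (∀ z ∈ S, Decoupled T z x) ∧ ‖jointQuadForm T x - mu‖ ≤ δ := by
  obtain ⟨M, hM, hdec⟩ := exists_finiteDimensional_forall_decoupled T S
  obtain ⟨x, hxM, hx, hnear⟩ := exists_mem_orthogonal_of_mem_jointEssNumRange hmu M hδ
  exact ⟨x, hx, fun z hz => hdec z hz x hxM, hnear⟩

lemma exists_pairwise_decoupled_of_mem_jointEssNumRange {mu : κ → Fin n → ℂ}
    (hmu : ∀ k, mu k ∈ jointEssNumRange T) (S : Submodule ℂ H) [FiniteDimensional ℂ S] {δ : ℝ}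
    (hδ : 0 < δ) (s : Finset κ) :
    ∃ x : κ → H, (s : Set κ).Pairwise (fun i j => Decoupled T (x i) (x j)) ∧
      ∀ i ∈ s, ‖x i‖ = 1 ∧ (∀ z ∈ S, Decoupled T z (x i)) ∧ ‖jointQuadForm T (x i) - mu i‖ ≤ δ := by
  classical
  induction s using Finset.induction_on with
  | empty => exact ⟨0, by simp⟩
  | insert k s hk ih =>
    obtain ⟨x, hpair, hx⟩ := ih
    obtain ⟨y, hy, hdec, hnear⟩ := exists_decoupled_of_mem_jointEssNumRange (hmu k)
      (S ⊔ Submodule.span ℂ (s.image x : Set H)) hδ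
    have hupdate (i : κ) (hi : i ∈ s) : Function.update x k y i = x i :=
      Function.update_of_ne (ne_of_mem_of_not_mem hi hk) y x
    refine ⟨Function.update x k y, ?_, ?_⟩
    · rw [Finset.coe_insert, Set.pairwise_insert_of_notMem (by simpa using hk)]
      refine ⟨hpair.imp_on ?_, fun i hi => ?_⟩
      · intro i hi j hj _ hij
        rwa [hupdate i hi, hupdate j hj]
      · rw [Function.update_self, hupdate i hi]
        have hdec_i : Decoupled T (x i) y := hdec _ (Submodule.mem_sup_right
          (Submodule.subset_span (Finset.mem_coe.2 (Finset.mem_image_of_mem x hi))))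
        exact ⟨hdec_i.symm, hdec_i⟩
    · refine (Finset.forall_mem_insert _ _ _).2 ⟨?_, fun i hi => ?_⟩
      · rw [Function.update_self]
        exact ⟨hy, fun z hz => hdec z (Submodule.mem_sup_left hz), hnear⟩
      · rw [hupdate i hi]
        exact hx i hi

lemma exists_orthonormal_block_of_mem_jointEssNumRange {mu : κ → Fin n → ℂ}
    (hmu : ∀ k, mu k ∈ jointEssNumRange T) (S : Submodule ℂ H) [FiniteDimensional ℂ S] {e : H}
    (heS : e ∈ Sᗮ) (he : ‖e‖ = 1) {s : Finset κ} (hs : s.Nonempty) :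
    ∃ w : κ → H, Orthonormal ℂ (fun i : s => w i) ∧ (∀ i ∈ s, w i ∈ Sᗮ) ∧
      e ∈ Submodule.span ℂ (w '' s) ∧
      ∀ i ∈ s, ‖jointQuadForm T (w i) - mu i‖ ≤ (4 * ‖T‖ + 1) / s.card := by
  have : Nonempty s := hs.to_subtype
  obtain ⟨x, hpair, hx⟩ := exists_pairwise_decoupled_of_mem_jointEssNumRange hmu (S ⊔ ℂ ∙ e)
    (show (0 : ℝ) < 1 / s.card by simpa using hs) s
  have hpair' : Pairwise fun i j : s => Decoupled T (x i) (x j) := fun i j hij =>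
    hpair i.2 j.2 (Subtype.coe_injective.ne hij)
  have hxe (i : s) : Decoupled T e (x i) :=
    (hx i i.2).2.1 e (Submodule.mem_sup_right (Submodule.mem_span_singleton_self e))
  have hxS (i : s) : x i ∈ Sᗮ := fun z hz => ((hx i i.2).2.1 z (Submodule.mem_sup_left hz)).1
  have hnorm (i : s) : ‖x i‖ = 1 := (hx i i.2).1
  set v : H := spreadShift ℂ (fun i : s => x i) e
  have hvS : v ∈ Sᗮ := Sᗮ.sub_mem (Sᗮ.smul_mem _ heS)
    (Sᗮ.smul_mem _ (Sᗮ.sum_mem fun i _ => hxS i))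
  refine ⟨fun i => x i + v, ?_, fun i hi => Sᗮ.add_mem (hxS ⟨i, hi⟩) hvS, ?_, fun i hi => ?_⟩
  · exact orthonormal_add_spreadShift ⟨hnorm, fun i j hij => (hpair' hij).1⟩ he
      fun i => (hxe i).symm.1
  · rw [Set.image_eq_range]
    exact mem_span_range_add_spreadShift _ e
  · have hshift : ‖jointQuadForm T (x i + v) - jointQuadForm T (x i)‖ ≤ 4 * ‖T‖ / s.card := by
      simpa using norm_jointQuadForm_add_spreadShift_sub_le T hnorm he hpair' hxe ⟨i, hi⟩
    calc ‖jointQuadForm T (x i + v) - mu i‖ ≤ 4 * ‖T‖ / s.card + 1 / s.card :=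
          norm_sub_le_norm_sub_add_norm_sub _ _ _ |>.trans (add_le_add hshift (hx i hi).2.2)
      _ = (4 * ‖T‖ + 1) / s.card := by ring

end EssentialNumericalRange

section GreedyBasis

variable {𝕜 E : Type*} [RCLike 𝕜] [NormedAddCommGroup E] [InnerProductSpace 𝕜 E]

variable (𝕜) in
/-- The cost `c`, where `c i x` is the price of using `x` as the `i`-th basis vector, admits cheap
blocks if every unit vector `e` orthogonal to a finite-dimensional subspace `S` lies in the span
of an orthonormal block in `Sᗮ`, indexed from any prescribed `K` on, of arbitrarily small total
cost. Only the values of `w` on `[K, L)` matter. -/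
def HasCheapBlocks (c : ℕ → E → ℝ) : Prop :=
  ∀ (S : Submodule 𝕜 E) [FiniteDimensional 𝕜 S], ∀ e ∈ Sᗮ, ‖e‖ = 1 → ∀ (K : ℕ), ∀ ε > 0,
    ∃ L > K, ∃ w : ℕ → E, Orthonormal 𝕜 (fun i : Finset.Ico K L => w i) ∧
      (∀ i ∈ Finset.Ico K L, w i ∈ Sᗮ) ∧ e ∈ Submodule.span 𝕜 (w '' Finset.Ico K L) ∧
      ∑ i ∈ Finset.Ico K L, c i (w i) ≤ ε

namespace HasCheapBlocks

variable {c : ℕ → E → ℝ}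

lemma exists_extension (hc : HasCheapBlocks 𝕜 c) (hdim : ¬ FiniteDimensional 𝕜 E) {K : ℕ}
    {u : ℕ → E} (hu : Orthonormal 𝕜 fun i : Finset.range K => u i) (y : E) {ε : ℝ} (hε : 0 < ε) :
    ∃ L > K, ∃ u' : ℕ → E, Set.EqOn u' u (Finset.range K) ∧
      Orthonormal 𝕜 (fun i : Finset.range L => u' i) ∧
      y ∈ Submodule.span 𝕜 (u' '' Finset.range L) ∧ ∑ i ∈ Finset.Ico K L, c i (u' i) ≤ ε := by
  classical
  have : FiniteDimensional 𝕜 (Submodule.span 𝕜 (u '' Finset.range K)) :=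
    FiniteDimensional.span_of_finite 𝕜 ((Finset.range K).finite_toSet.image u)
  obtain ⟨e, heS, he, hy⟩ := exists_norm_eq_one_mem_orthogonal_mem_sup hdim
    (Submodule.span 𝕜 (u '' Finset.range K)) y
  obtain ⟨L, hL, w, hw, hwS, hew, hcost⟩ := hc _ e heS he K ε hε
  have hunion : Finset.range L = Finset.range K ∪ Finset.Ico K L := by
    simp only [Finset.range_eq_Ico, Finset.Ico_union_Ico_eq_Ico K.zero_le hL.le]
  set u' : ℕ → E := (Finset.range K).piecewise u w
  have hleft (i : ℕ) (hi : i ∈ Finset.range K) : u' i = u i :=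
    Finset.piecewise_eq_of_mem _ u w hi
  have hright (i : ℕ) (hi : i ∈ Finset.Ico K L) : u' i = w i :=
    Finset.piecewise_eq_of_notMem _ u w (by simpa using (Finset.mem_Ico.1 hi).1)
  have hcost' : ∑ i ∈ Finset.Ico K L, c i (u' i) ≤ ε :=
    (Finset.sum_congr rfl fun i hi => by rw [hright i hi]).trans_le hcost
  refine ⟨L, hL, u', hleft, ?_, ?_, hcost'⟩
  · rw [hunion]
    refine orthonormal_union (by simpa only [hleft _ (Subtype.prop _)] using hu)
      (by simpa only [hright _ (Subtype.prop _)] using hw) fun i hi j hj => ?_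
    rw [hleft i hi, hright j hj]
    exact hwS j hj (u i) (Submodule.subset_span ⟨i, hi, rfl⟩)
  · rw [hunion, Finset.coe_union, Set.image_union, Submodule.span_union, Set.image_congr hleft,
      Set.image_congr hright]
    exact sup_le_sup_left ((Submodule.span_singleton_le_iff_mem _ _).2 hew) _ hy

lemma exists_compatible_extensions (hc : HasCheapBlocks 𝕜 c) (hdim : ¬ FiniteDimensional 𝕜 E)
    (y : ℕ → E) {ε : ℕ → ℝ} (hε : ∀ m, 0 < ε m) :
    ∃ (K : ℕ → ℕ) (U : ℕ → ℕ → E), StrictMono K ∧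
      (∀ m, Set.EqOn (U (m + 1)) (U m) (Finset.range (K m))) ∧
      (∀ m, Orthonormal 𝕜 fun i : Finset.range (K m) => U m i) ∧
      (∀ m, y m ∈ Submodule.span 𝕜 (U (m + 1) '' Finset.range (K (m + 1)))) ∧
      ∀ m, ∑ i ∈ Finset.Ico (K m) (K (m + 1)), c i (U (m + 1) i) ≤ ε m := by
  let State := {s : ℕ × (ℕ → E) // Orthonormal 𝕜 fun i : Finset.range s.1 => s.2 i}
  have hnext (m : ℕ) (s : State) : ∃ t : State, s.1.1 < t.1.1 ∧
      Set.EqOn t.1.2 s.1.2 (Finset.range s.1.1) ∧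
      y m ∈ Submodule.span 𝕜 (t.1.2 '' Finset.range t.1.1) ∧
      ∑ i ∈ Finset.Ico s.1.1 t.1.1, c i (t.1.2 i) ≤ ε m := by
    obtain ⟨L, hL, u', heq, hu', hy, hcost⟩ := hc.exists_extension hdim s.2 (y m) (hε m)
    exact ⟨⟨⟨L, u'⟩, hu'⟩, hL, heq, hy, hcost⟩
  choose next hlt heq hy hcost using hnext
  have hempty : Orthonormal 𝕜 fun i : Finset.range 0 => (0 : ℕ → E) i :=
    have : IsEmpty (Finset.range 0) := Finset.isEmpty_coe_sort.2 Finset.range_zero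
    .of_isEmpty _
  let S : ℕ → State := fun m => Nat.rec ⟨(0, 0), hempty⟩ next m
  exact ⟨fun m => (S m).1.1, fun m => (S m).1.2, strictMono_nat_of_lt_succ fun m => hlt m (S m),
    fun m => heq m (S m), fun m => (S m).2, fun m => hy m (S m), fun m => hcost m (S m)⟩

theorem exists_hilbertBasis_summable [CompleteSpace E] [TopologicalSpace.SeparableSpace E]
    (hc : HasCheapBlocks 𝕜 c) (hdim : ¬ FiniteDimensional 𝕜 E) (hc_nonneg : ∀ i x, 0 ≤ c i x) :
    ∃ u : HilbertBasis ℕ 𝕜 E, Summable fun i => c i (u i) := by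
  obtain ⟨K, U, hK, hcompat, hU, hy, hcost⟩ := hc.exists_compatible_extensions hdim
    (TopologicalSpace.denseSeq E) (ε := fun m => (1 / 2 : ℝ) ^ m) fun m => by positivity
  obtain ⟨v, hv⟩ := exists_eqOn_of_eqOn_succ hK hcompat
  have horth : Orthonormal 𝕜 v := by
    refine orthonormal_of_forall_range hK fun m => ?_
    simpa only [hv m (Subtype.prop _)] using hU m
  have hdense : ⊤ ≤ (Submodule.span 𝕜 (Set.range v)).topologicalClosure := by
    intro x _
    refine closure_mono ?_ (TopologicalSpace.denseRange_denseSeq E x)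
    rintro _ ⟨m, rfl⟩
    have hm := hy m
    rw [← Set.image_congr (hv (m + 1))] at hm
    exact Submodule.span_mono (Set.image_subset_range v _) hm
  have hsum : Summable fun i => c i (v i) := by
    refine summable_of_sum_Ico_le hK (fun i => hc_nonneg i _) summable_geometric_two fun m => ?_
    refine (Finset.sum_congr rfl fun i hi => ?_).trans_le (hcost m)
    rw [hv (m + 1) (Finset.mem_coe.2 (Finset.mem_range.2 (Finset.mem_Ico.1 hi).2))]
  exact ⟨HilbertBasis.mk horth hdense, by simpa only [HilbertBasis.coe_mk] using hsum⟩

end HasCheapBlocks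

end GreedyBasis

section Diagonals

variable {H : Type*} [NormedAddCommGroup H] [InnerProductSpace ℂ H] [CompleteSpace H] {n : ℕ}
  {T : Fin n → H →L[ℂ] H} {mu : ℕ → Fin n → ℂ} {p : ℝ}

lemma hasCheapBlocks_of_mem_jointEssNumRange (hmu : ∀ k, mu k ∈ jointEssNumRange T) (hp : 1 < p) :
    HasCheapBlocks ℂ fun k (x : H) => ‖jointQuadForm T x - mu k‖ ^ p := by
  intro S _ e heS he K ε hε
  obtain ⟨N, hcost, hN⟩ := (((tendsto_natCast_mul_div_rpow_zero (C := 4 * ‖T‖ + 1)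
    (by positivity) hp).eventually_le_const hε).and (eventually_gt_atTop 0)).exists
  have hcard : (Finset.Ico K (K + N)).card = N := by simp
  obtain ⟨w, hw, hwS, hew, hnear⟩ := exists_orthonormal_block_of_mem_jointEssNumRange hmu S heS he
    (s := Finset.Ico K (K + N)) (by simpa using hN)
  refine ⟨K + N, Nat.lt_add_of_pos_right hN, w, hw, hwS, hew, ?_⟩
  rw [hcard] at hnear
  calc ∑ i ∈ Finset.Ico K (K + N), ‖jointQuadForm T (w i) - mu i‖ ^ p
      ≤ (Finset.Ico K (K + N)).card • ((4 * ‖T‖ + 1) / N) ^ p :=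
        Finset.sum_le_card_nsmul _ _ _ fun i hi =>
          Real.rpow_le_rpow (norm_nonneg _) (hnear i hi) (by linarith)
    _ = N * ((4 * ‖T‖ + 1) / N) ^ p := by rw [hcard, nsmul_eq_mul]
    _ ≤ ε := hcost

theorem exists_hilbertBasis_summable_of_mem_jointEssNumRange [TopologicalSpace.SeparableSpace H]
    (hdim : ¬ FiniteDimensional ℂ H) (hmu : ∀ k, mu k ∈ jointEssNumRange T) (hp : 1 < p) :
    ∃ u : HilbertBasis ℕ ℂ H, Summable fun k => ‖jointQuadForm T (u k) - mu k‖ ^ p :=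
  (hasCheapBlocks_of_mem_jointEssNumRange hmu hp).exists_hilbertBasis_summable hdim
    fun _ _ => by positivity

end Diagonals

/-- If `∑ₖ dist(λ_k, W_e(𝒯))^p < ∞` (`p > 1`), then there is an orthonormal basis
`(u_k)` with `∑ₖ (max_j |⟨T_j u_k, u_k⟩ - λ_{k,j}|)^p < ∞`; equivalently `(λ_k)` is a
diagonal of `𝒯 + 𝒦` for a tuple `𝒦` of Schatten-`p`-class operators, diagonal in the
basis `(u_k)`. -/
theorem stmt_12 {H : Type*} [NormedAddCommGroup H] [InnerProductSpace ℂ H]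
    [CompleteSpace H] [TopologicalSpace.SeparableSpace H]
    (hdim : ¬ FiniteDimensional ℂ H)
    {n : ℕ} (T : Fin n → H →L[ℂ] H)
    (p : ℝ) (hp : 1 < p)
    (lam : ℕ → Fin n → ℂ)
    (hlam : Summable (fun k => (Metric.infDist (lam k) (jointEssNumRange T)) ^ p)) :
    ∃ u : HilbertBasis ℕ ℂ H,
      Summable (fun k => ‖fun j => ⟪(T j) (u k), u k⟫ - lam k j‖ ^ p) := by
  obtain ⟨mu, hmu, hdist⟩ := exists_seq_mem_summable_dist_rpow
    (jointEssNumRange_nonempty hdim T) (zero_lt_one.trans hp) hlam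
  obtain ⟨u, hu⟩ := exists_hilbertBasis_summable_of_mem_jointEssNumRange hdim hmu hp
  have hsum := Real.summable_Lp_add_of_nonneg hp.le (fun _ => norm_nonneg _)
    (fun _ => dist_nonneg) hu hdist
  refine ⟨u, hsum.of_nonneg_of_le (fun _ => by positivity) fun k => ?_⟩
  refine Real.rpow_le_rpow (norm_nonneg _) ?_ (by linarith)
  calc ‖jointQuadForm T (u k) - lam k‖ ≤ ‖jointQuadForm T (u k) - mu k‖ + ‖mu k - lam k‖ :=
        norm_sub_le_norm_sub_add_norm_sub _ _ _
    _ = ‖jointQuadForm T (u k) - mu k‖ + dist (lam k) (mu k) := by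
        rw [dist_eq_norm, norm_sub_rev (lam k)]
end
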